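/- arXiv:1804.07277 — 2 statements merged into one kernel-verified Lean document; each statement's English description precedes it below -/
import Mathlib

section
/- If F : (ℕ → ℕ) → ℕ is continuous with respect to the Baire topology, then the Kohlenbach tree 𝒯^K(F) is well-founded. -/
/-- The function `[x⃗ j^ω]` extending a finite sequence by the constant `j`. -/
def extSeq (x : List ℕ) (j : ℕ) : ℕ → ℕ := fun i => x.getD i j

/-- The Spector bar condition: `F([x⃗ 0^ω]) < |x⃗|`. -/
def SpecBar (F : (ℕ → ℕ) → ℕ) (x : List ℕ) : Prop :=
  F (extSeq x 0) < x.length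

/-- The Kohlenbach bar condition: `F([x⃗ 0^ω]) = F([x⃗ 1^ω])`. -/
def KohBar (F : (ℕ → ℕ) → ℕ) (x : List ℕ) : Prop :=
  F (extSeq x 0) = F (extSeq x 1)

/-- The Spector tree of `F`: sequences none of whose proper prefixes
satisfy the Spector bar condition. -/
def SpecTree (F : (ℕ → ℕ) → ℕ) : Set (List ℕ) :=
  {x | ∀ y, y <+: x → y ≠ x → ¬ SpecBar F y}

/-- The Kohlenbach tree of `F`. -/
def KohTree (F : (ℕ → ℕ) → ℕ) : Set (List ℕ) :=
  {x | ∀ y, y <+: x → y ≠ x → ¬ KohBar F y}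

/-- `x` is a leaf of `T`. -/
def LeafNode (T : Set (List ℕ)) (x : List ℕ) : Prop :=
  x ∈ T ∧ ∀ y : ℕ, x ++ [y] ∉ T

/-- `x` is an internal node of `T`. -/
def InternalNode (T : Set (List ℕ)) (x : List ℕ) : Prop :=
  x ∈ T ∧ ∀ y : ℕ, x ++ [y] ∈ T

/-- `T` is a tree: nonempty, prefix-closed, and every node is a leaf or internal. -/
def IsTree (T : Set (List ℕ)) : Prop :=
  T.Nonempty ∧ (∀ x ∈ T, ∀ y, y <+: x → y ∈ T) ∧
    ∀ x ∈ T, LeafNode T x ∨ InternalNode T x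

/-- `T` is well-founded: no infinite sequence all of whose initial segments lie in `T`. -/
def WFTree (T : Set (List ℕ)) : Prop :=
  ¬ ∃ x : ℕ → ℕ, ∀ i : ℕ, (List.range i).map x ∈ T

/-- The odd part `θ(n)` of a natural number. -/
def oddPart (n : ℕ) : ℕ := n / 2 ^ (n.factorization 2)

/-!
The sequences `[x(0), …, x(n - 1), j^ω]` converge to `x` in the Baire topology, for every `j`.
Since `ℕ` is discrete, `F` takes the value `F x` on all of them from some `n` on. Comparing `j = 0`
with `j = 1` shows that a long enough initial segment of `x` satisfies the bar condition, so `x` is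
not a path through the tree.
-/

open Filter Topology

/-- The tree of finite sequences none of whose proper prefixes satisfies the bar condition `P`.
The Kohlenbach tree `KohTree F` is, by definition, `barTree (KohBar F)`. -/
def barTree (P : List ℕ → Prop) : Set (List ℕ) :=
  {x | ∀ y, y <+: x → y ≠ x → ¬ P y}

theorem take_map_range {α : Type*} (x : ℕ → α) {k n : ℕ} (hk : k ≤ n) :
    ((List.range n).map x).take k = (List.range k).map x := by
  rw [← List.map_take, List.take_range, min_eq_left hk]

theorem map_range_mem_barTree_iff {P : List ℕ → Prop} {x : ℕ → ℕ} {n : ℕ} :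
    (List.range n).map x ∈ barTree P ↔ ∀ k < n, ¬ P ((List.range k).map x) := by
  constructor
  · intro hmem k hk
    have hprefix : (List.range k).map x <+: (List.range n).map x :=
      take_map_range x hk.le ▸ List.take_prefix k _
    refine hmem _ hprefix fun heq => hk.ne ?_
    simpa only [List.length_map, List.length_range] using congrArg List.length heq
  · intro hbar y hprefix hne
    have hlt : y.length < n := by
      simpa only [List.length_map, List.length_range] using
        hprefix.length_le.lt_of_ne fun hlen => hne (hprefix.eq_of_length hlen)
    have hy : y = (List.range y.length).map x :=
      (List.prefix_iff_eq_take.mp hprefix).trans (take_map_range x hlt.le)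
    exact hy ▸ hbar y.length hlt

theorem wfTree_barTree_iff {P : List ℕ → Prop} :
    WFTree (barTree P) ↔ ∀ x : ℕ → ℕ, ∃ n, P ((List.range n).map x) := by
  simp only [WFTree, map_range_mem_barTree_iff]
  push Not
  exact forall_congr' fun x =>
    ⟨fun ⟨_, n, _, hn⟩ => ⟨n, hn⟩, fun ⟨n, hn⟩ => ⟨n + 1, n, n.lt_succ_self, hn⟩⟩

theorem extSeq_map_range_of_lt (x : ℕ → ℕ) (j : ℕ) {i n : ℕ} (hi : i < n) :
    extSeq ((List.range n).map x) j i = x i := by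
  simp [extSeq, hi]

theorem tendsto_extSeq_map_range (x : ℕ → ℕ) (j : ℕ) :
    Tendsto (fun n => extSeq ((List.range n).map x) j) atTop (𝓝 x) :=
  tendsto_pi_nhds.mpr fun i =>
    tendsto_const_nhds.congr' <|
      (eventually_gt_atTop i).mono fun _ hi => (extSeq_map_range_of_lt x j hi).symm

theorem eventually_apply_extSeq_map_range_eq {Y : Type*} [TopologicalSpace Y]
    [DiscreteTopology Y] {F : (ℕ → ℕ) → Y} {x : ℕ → ℕ} (hF : ContinuousAt F x) (j : ℕ) :
    ∀ᶠ n in atTop, F (extSeq ((List.range n).map x) j) = F x := by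
  have hlim := hF.tendsto.comp (tendsto_extSeq_map_range x j)
  rwa [nhds_discrete, tendsto_pure] at hlim

theorem exists_kohBar_map_range {F : (ℕ → ℕ) → ℕ} {x : ℕ → ℕ} (hF : ContinuousAt F x) :
    ∃ n, KohBar F ((List.range n).map x) :=
  ((eventually_apply_extSeq_map_range_eq hF 0).and
    (eventually_apply_extSeq_map_range_eq hF 1)).exists.imp fun _ ⟨h₀, h₁⟩ => h₀.trans h₁.symm

theorem kohlenbach_tree_wf_of_continuous (F : (ℕ → ℕ) → ℕ) (hF : Continuous F) :
    WFTree (KohTree F) := by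
  refine wfTree_barTree_iff.mpr fun x => ?_
  exact exists_kohBar_map_range hF.continuousAt
end

section
/- Let 𝒯 be a well-founded tree, c an injective function from finite sequences of naturals to ℕ, and φ₀ the unique function on 𝒯 with φ₀(x⃗) = 2·c(x⃗)+1 on leaves and φ₀(x⃗) = 2·φ₀(x⃗·0) on internal nodes. Let d ∈ ℕ and x₀,…,x_d ∈ ℕ be such that for every w ≤ d+1 the sequence x^w := (x₀,…,x_{w−1}) is an internal node of 𝒯. Put y_w = φ₀(x^w·0) for w ≤ d+1, and assume the odd parts θ(y₀),…,θ(y_{d+1}) are pairwise distinct. Let K ∈ ℕ and define G₁ : (ℕ → ℕ) → ℕ by: G₁(g) = K if g(0) = y_{d+1}; otherwise, if g(0) = y_w for some w ≤ d (unique, since the y's are pairwise distinct), then G₁(g) = K if g(x_w) = K and G₁(g) = 2·g(0) otherwise; otherwise G₁(g) = 2·g(0). Let φ₁ be the unique function on 𝒯 with φ₁(x⃗) = 2·c(x⃗)+1 on leaves and φ₁(x⃗) = G₁(λz. φ₁(x⃗·z)) on internal nodes. Then φ₁(x^w) = K for every w ≤ d+1; in particular φ₁ takes the value K at the empty sequence.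 -/
/-!
Along `0^ω` the function `φ₀` halves at each step, so a node `u` with `φ₁ u ≠ φ₀ u` has one of the
special values `y w` below it, and then `φ₀ u` is `y w` times a positive power of two. For
`u = x^w · 0` this is impossible: it forces two of the odd parts of the `y w` to agree, or
`y w = 2 ^ (j + 1) * y w`. So `φ₁ (x^w · 0) = y w` for all `w`, which makes `G₁` return `K` at
the end of the path and then propagate `K` back, one node at a time, to the root.
-/

theorem exists_forall_map_range_mem {α : Type*} {S : Set (List α)} (nil_mem : [] ∈ S)
    (exists_child : ∀ u ∈ S, ∃ z, u ++ [z] ∈ S) :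
    ∃ x : ℕ → α, ∀ i, (List.range i).map x ∈ S := by
  have : Nonempty α := (exists_child [] nil_mem).nonempty
  choose! next next_mem using exists_child
  let node : ℕ → List α := Nat.rec [] fun _ u => u ++ [next u]
  have map_range_eq (i : ℕ) : (List.range i).map (next ∘ node) = node i := by
    induction i with
    | zero => rfl
    | succ i ih => rw [List.range_succ, List.map_append, ih]; rfl
  have node_mem (i : ℕ) : node i ∈ S := by
    induction i with
    | zero => exact nil_mem
    | succ i ih => exact next_mem _ ih
  exact ⟨next ∘ node, fun i => map_range_eq i ▸ node_mem i⟩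

theorem IsTree.bar_induction {T : Set (List ℕ)} (hT : IsTree T) (hwf : WFTree T)
    {P : List ℕ → Prop} (leaf : ∀ v, LeafNode T v → P v)
    (internal : ∀ v, InternalNode T v → (∀ z, P (v ++ [z])) → P v) : ∀ v ∈ T, P v := by
  obtain ⟨-, prefix_mem, leaf_or_internal⟩ := hT
  by_contra! ⟨v, hv, hPv⟩
  -- The prefixes of counterexamples form a subtree without leaves.
  let S : Set (List ℕ) := {u | ∃ w ∈ T, ¬ P w ∧ u <+: w}
  have exists_child : ∀ u ∈ S, ∃ z, u ++ [z] ∈ S := by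
    rintro _ ⟨_, hw, hPw, (_ | ⟨z, t⟩), rfl⟩
    · rw [List.append_nil] at hw hPw
      have hint := (leaf_or_internal _ hw).resolve_left (mt (leaf _) hPw)
      obtain ⟨z, hz⟩ := not_forall.1 (mt (internal _ hint) hPw)
      exact ⟨z, _, hint.2 z, hz, List.prefix_rfl⟩
    · exact ⟨z, _, hw, hPw, t, by simp⟩
  obtain ⟨x, hx⟩ :=
    exists_forall_map_range_mem (S := S) ⟨v, hv, hPv, List.nil_prefix⟩ exists_child
  refine hwf ⟨x, fun i => ?_⟩
  obtain ⟨w, hw, -, hprefix⟩ := hx i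
  exact prefix_mem w hw _ hprefix

theorem oddPart_two_pow_mul (j n : ℕ) : oddPart (2 ^ j * n) = oddPart n :=
  Nat.ordCompl_self_pow_mul n j Nat.prime_two

/-- `φ` is defined on `T` by bar recursion with leaf function `ℓ` and branch functional `G`; its
values outside `T` are arbitrary. -/
structure IsBarRec (T : Set (List ℕ)) (ℓ : List ℕ → ℕ) (G : (ℕ → ℕ) → ℕ) (φ : List ℕ → ℕ) :
    Prop where
  leaf : ∀ v, LeafNode T v → φ v = ℓ v
  internal : ∀ v, InternalNode T v → φ v = G fun z => φ (v ++ [z])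

namespace IsBarRec

variable {T : Set (List ℕ)} {ℓ : List ℕ → ℕ} {φ φ₀ φ₁ : List ℕ → ℕ} {G : (ℕ → ℕ) → ℕ}

theorem pos (hT : IsTree T) (hwf : WFTree T) (h : IsBarRec T ℓ G φ)
    (hℓ : ∀ v, LeafNode T v → 0 < ℓ v) (hG : ∀ g, (∀ z, 0 < g z) → 0 < G g) :
    ∀ v ∈ T, 0 < φ v :=
  hT.bar_induction hwf (fun v hv => h.leaf v hv ▸ hℓ v hv)
    fun v hv ih => h.internal v hv ▸ hG _ ih

theorem eq_of_forall_ne_two_pow_mul (hT : IsTree T) (hwf : WFTree T)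
    (h₀ : IsBarRec T ℓ (fun g => 2 * g 0) φ₀) (h₁ : IsBarRec T ℓ G φ₁) {B : Set ℕ}
    (hG : ∀ g, g 0 ∉ B → G g = 2 * g 0) :
    ∀ v ∈ T, (∀ b ∈ B, ∀ j, φ₀ v ≠ 2 ^ (j + 1) * b) → φ₁ v = φ₀ v := by
  refine hT.bar_induction hwf (fun v hv _ => by rw [h₀.leaf v hv, h₁.leaf v hv]) ?_
  intro v hv ih hne
  have double : φ₀ v = 2 * φ₀ (v ++ [0]) := h₀.internal v hv
  have child_eq : φ₁ (v ++ [0]) = φ₀ (v ++ [0]) :=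
    ih 0 fun b hb j hj => hne b hb (j + 1) (by rw [double, hj]; ring)
  have child_notMem : φ₁ (v ++ [0]) ∉ B :=
    fun hB => hne _ hB 0 (by rw [double, child_eq, zero_add, pow_one])
  rw [h₁.internal v hv, hG _ child_notMem, child_eq, double]

end IsBarRec

theorem phi1_K_values_general {T : Set (List ℕ)} (hT : IsTree T) (hwf : WFTree T)
    {ℓ : List ℕ → ℕ} (hℓ : ∀ v, LeafNode T v → 0 < ℓ v) {φ₀ φ₁ : List ℕ → ℕ} {G : (ℕ → ℕ) → ℕ}
    (h₀ : IsBarRec T ℓ (fun g => 2 * g 0) φ₀) (h₁ : IsBarRec T ℓ G φ₁) {n : ℕ} {xs y : ℕ → ℕ}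
    (hxs : ∀ w ≤ n, InternalNode T ((List.range w).map xs))
    (hy : ∀ w ≤ n, y w = φ₀ ((List.range w).map xs ++ [0]))
    (hdist : ∀ w ≤ n, ∀ w' ≤ n, w ≠ w' → oddPart (y w) ≠ oddPart (y w')) {K : ℕ}
    (hG_last : ∀ g, g 0 = y n → G g = K)
    (hG_path : ∀ g, ∀ w < n, g 0 = y w → g 0 ≠ y n → g (xs w) = K → G g = K)
    (hG_else : ∀ g, (∀ w ≤ n, g 0 ≠ y w) → G g = 2 * g 0) :
    ∀ w ≤ n, φ₁ ((List.range w).map xs) = K := by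
  have y_pos (w) (hw : w ≤ n) : 0 < y w :=
    hy w hw ▸ h₀.pos hT hwf hℓ (fun g hg => Nat.mul_pos two_pos (hg 0)) _ ((hxs w hw).2 0)
  have y_ne (w) (hw : w ≤ n) (w') (hw' : w' ≤ n) (j : ℕ) : y w ≠ 2 ^ (j + 1) * y w' := by
    intro h
    obtain rfl : w = w' := by
      by_contra hne
      exact hdist w hw w' hw' hne (by rw [h, oddPart_two_pow_mul])
    exact (lt_mul_of_one_lt_left (y_pos w hw) (Nat.one_lt_two_pow j.succ_ne_zero)).ne h
  have child_eq (w) (hw : w ≤ n) : φ₁ ((List.range w).map xs ++ [0]) = y w := by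
    rw [hy w hw]
    refine h₀.eq_of_forall_ne_two_pow_mul hT hwf h₁ (B := y '' Set.Iic n)
      (fun g hg => hG_else g fun w' hw' h => hg ⟨w', hw', h.symm⟩) _ ((hxs w hw).2 0) ?_
    rintro _ ⟨w', hw', rfl⟩ j
    exact hy w hw ▸ y_ne w hw w' hw' j
  intro w hw
  induction hw using Nat.decreasingInduction with
  | self => rw [h₁.internal _ (hxs n le_rfl), hG_last _ (child_eq n le_rfl)]
  | of_succ w hw ih =>
    rw [List.range_succ, List.map_append, List.map_singleton] at ih
    have y_ne_last : y w ≠ y n :=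
      fun h => hdist w hw.le n le_rfl hw.ne (congrArg oddPart h)
    rw [h₁.internal _ (hxs w hw.le)]
    exact hG_path _ w hw (child_eq w hw.le) (child_eq w hw.le ▸ y_ne_last) ih

theorem phi1_K_values (T : Set (List ℕ)) (hT : IsTree T) (hwf : WFTree T)
    (c : List ℕ → ℕ) (hc : Function.Injective c)
    (φ₀ : List ℕ → ℕ)
    (hleaf0 : ∀ v, LeafNode T v → φ₀ v = 2 * c v + 1)
    (hint0 : ∀ v, InternalNode T v → φ₀ v = 2 * φ₀ (v ++ [0]))
    (d : ℕ) (xs : ℕ → ℕ)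
    (hxs : ∀ w ≤ d + 1, InternalNode T ((List.range w).map xs))
    (y : ℕ → ℕ)
    (hy : ∀ w ≤ d + 1, y w = φ₀ ((List.range w).map xs ++ [0]))
    (hdist : ∀ w ≤ d + 1, ∀ w' ≤ d + 1, w ≠ w' → oddPart (y w) ≠ oddPart (y w'))
    (K : ℕ) (G₁ : (ℕ → ℕ) → ℕ)
    (hG₁ : ∀ g : ℕ → ℕ,
      (g 0 = y (d + 1) → G₁ g = K) ∧
      (∀ w ≤ d, g 0 = y w → g 0 ≠ y (d + 1) →
        G₁ g = if g (xs w) = K then K else 2 * g 0) ∧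
      ((∀ w ≤ d + 1, g 0 ≠ y w) → G₁ g = 2 * g 0))
    (φ₁ : List ℕ → ℕ)
    (hleaf1 : ∀ v, LeafNode T v → φ₁ v = 2 * c v + 1)
    (hint1 : ∀ v, InternalNode T v → φ₁ v = G₁ (fun z => φ₁ (v ++ [z]))) :
    (∀ w ≤ d + 1, φ₁ ((List.range w).map xs) = K) ∧ φ₁ [] = K := by
  have path_eq := phi1_K_values_general hT hwf (fun _ _ => Nat.succ_pos _) ⟨hleaf0, hint0⟩
    ⟨hleaf1, hint1⟩ hxs hy hdist (fun g => (hG₁ g).1)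
    (fun g w hw h0 hne hK => by rw [(hG₁ g).2.1 w (Nat.le_of_lt_succ hw) h0 hne, if_pos hK])
    (fun g => (hG₁ g).2.2)
  exact ⟨path_eq, path_eq 0 (Nat.zero_le _)⟩
end
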